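/- arXiv:2004.00837 — 7 statements merged into one kernel-verified Lean document; each statement's English description precedes it below -/
import Mathlib

section
/- Per-step approximate composite mirror descent inequality: Let K ⊆ E be a nonempty convex set whose N-diameter is at most D_K, let ω : E → ℝ be differentiable, σ-strongly convex with respect to N on K (σ > 0), with ∇ω G_ω-Lipschitz with respect to N on K. Let x₀ ∈ K, let ℓ : E → ℝ be convex with a subgradient g at x₀ relative to K satisfying N_*(g) ≤ G_ℓ, let r : E → ℝ be convex, and let η > 0. Suppose y* ∈ K minimizes F(x) = ⟪g, x⟫ + r(x) + (1/η) V_ω(x, x₀) over K. Then for all x, y ∈ K: ℓ(x₀) − ℓ(x) + r(y*) − r(x) ≤ (1/η) ( V_ω(x, x₀) − V_ω(x, y) ) + ( G_ℓ + (2/η) G_ω D_K ) N(y − y*) + (η / (2σ)) G_ℓ². -/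
open scoped RealInnerProductSpace

/-- Euclidean space `ℝ^d` with the Euclidean inner product. -/
abbrev Euc (d : ℕ) := EuclideanSpace ℝ (Fin d)

/-- The dual norm of `N`: `N_*(g) = sup {⟪g, x⟫ : N x ≤ 1}`. -/
noncomputable def dualNorm (d : ℕ) (N : Euc d → ℝ) (g : Euc d) : ℝ :=
  sSup ((fun x => ⟪g, x⟫) '' {x : Euc d | N x ≤ 1})

theorem dual_bdd (d : ℕ) (N : Euc d → ℝ)
    (hN_add : ∀ x y, N (x + y) ≤ N x + N y)
    (hN_smul : ∀ (c : ℝ) (x : Euc d), N (c • x) = |c| * N x)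
    (hN_pos : ∀ x : Euc d, x ≠ 0 → 0 < N x) (hd : 1 ≤ d) (g : Euc d) :
    BddAbove ((fun x => ⟪g, x⟫) '' {x : Euc d | N x ≤ 1}) := by
  have hconv : ConvexOn ℝ Set.univ N := by
    refine ⟨convex_univ, ?_⟩
    intro x _ y _ a b ha hb _
    have := hN_add (a • x) (b • y)
    rw [hN_smul, hN_smul, abs_of_nonneg ha, abs_of_nonneg hb] at this
    simpa using this
  have hcont : ContinuousOn N Set.univ := hconv.continuousOn isOpen_univ
  have hcont' : Continuous N := continuousOn_univ.mp hcont
  haveI : Nonempty (Fin d) := ⟨⟨0, hd⟩⟩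
  have hne : (Metric.sphere (0 : Euc d) 1).Nonempty :=
    (NormedSpace.sphere_nonempty (E := Euc d)).2 zero_le_one
  obtain ⟨z, hz, hzmin⟩ := (isCompact_sphere (0 : Euc d) 1).exists_isMinOn hne hcont'.continuousOn
  have hz1 : ‖z‖ = 1 := by simpa using hz
  have hz0 : z ≠ 0 := by
    intro h
    simp [h] at hz1
  have hc := hN_pos z hz0
  refine ⟨‖g‖ * (N z)⁻¹, ?_⟩
  rintro _ ⟨x, hx, rfl⟩
  have hx : N x ≤ 1 := hx
  refine (real_inner_le_norm g x).trans ?_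
  refine mul_le_mul_of_nonneg_left ?_ (norm_nonneg _)
  by_cases h0 : x = 0
  · rw [h0, norm_zero]; positivity
  have hxn : 0 < ‖x‖ := norm_pos_iff.2 h0
  have hm : N z ≤ N ((‖x‖⁻¹ : ℝ) • x) := by
    apply hzmin
    simp [norm_smul, hxn.ne']
  rw [hN_smul, abs_of_pos (inv_pos.2 hxn)] at hm
  rw [← one_div, le_div_iff₀ hc]
  calc ‖x‖ * N z ≤ ‖x‖ * (‖x‖⁻¹ * N x) := mul_le_mul_of_nonneg_left hm hxn.le
    _ = N x := by field_simp
    _ ≤ 1 := hx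

theorem dual_le (d : ℕ) (N : Euc d → ℝ)
    (hN_add : ∀ x y, N (x + y) ≤ N x + N y)
    (hN_smul : ∀ (c : ℝ) (x : Euc d), N (c • x) = |c| * N x)
    (hN_pos : ∀ x : Euc d, x ≠ 0 → 0 < N x) (hd : 1 ≤ d) (g x : Euc d) :
    ⟪g, x⟫ ≤ dualNorm d N g * N x := by
  by_cases h0 : x = 0
  · have := hN_smul 0 0
    simp at this
    simp [h0, this]
  have hx := hN_pos x h0
  have := le_csSup (dual_bdd d N hN_add hN_smul hN_pos hd g)
    (Set.mem_image_of_mem (fun x => ⟪g, x⟫) (show (N x)⁻¹ • x ∈ {x : Euc d | N x ≤ 1} by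
      simp only [Set.mem_setOf_eq]
      rw [hN_smul, abs_of_pos (inv_pos.2 hx), inv_mul_cancel₀ hx.ne']))
  simp only [inner_smul_right] at this
  unfold dualNorm
  rw [inv_mul_le_iff₀ hx] at this
  linarith

/-- **Per-step approximate composite mirror descent inequality.**
Let `K` be a nonempty convex set of `N`-diameter at most `D_K`, `ω` be `σ`-strongly convex
w.r.t. `N` on `K` with `G_ω`-Lipschitz gradient on `K`, `g` a subgradient of the convex
function `ℓ` at `x₀` relative to `K` with `N_*(g) ≤ G_ℓ`, `r` convex, `η > 0`, and let
`y*` minimize `F x = ⟪g, x⟫ + r x + (1/η) V_ω(x, x₀)` over `K`.  Then for all `x, y ∈ K`: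
`ℓ x₀ - ℓ x + r y* - r x ≤ (1/η)(V(x,x₀) - V(x,y)) + (G_ℓ + (2/η) G_ω D_K) N(y - y*)
  + (η/(2σ)) G_ℓ²`. -/
theorem per_step_approx_composite_md
    (d : ℕ) (hd : 1 ≤ d)
    -- N is a norm on ℝ^d
    (N : Euc d → ℝ)
    (hN_add : ∀ x y, N (x + y) ≤ N x + N y)
    (hN_smul : ∀ (c : ℝ) (x : Euc d), N (c • x) = |c| * N x)
    (hN_pos : ∀ x : Euc d, x ≠ 0 → 0 < N x)
    -- K is a nonempty convex set with N-diameter at most D_K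
    (K : Set (Euc d)) (hKne : K.Nonempty) (hKconv : Convex ℝ K)
    (DK : ℝ) (hDK : ∀ x ∈ K, ∀ y ∈ K, N (x - y) ≤ DK)
    -- ω is differentiable with gradient ω', Bregman divergence V
    (ω : Euc d → ℝ) (ω' : Euc d → Euc d)
    (hgrad : ∀ x, HasGradientAt ω (ω' x) x)
    (V : Euc d → Euc d → ℝ)
    (hV : ∀ x y, V x y = ω x - ω y - ⟪ω' y, x - y⟫)
    -- ω is σ-strongly convex w.r.t. N on K
    (σ : ℝ) (hσ : 0 < σ)
    (hstrong : ∀ x ∈ K, ∀ y ∈ K, ω x ≥ ω y + ⟪ω' y, x - y⟫ + σ / 2 * N (x - y) ^ 2)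
    -- ∇ω is G_ω-Lipschitz w.r.t. N on K
    (Gω : ℝ) (hGω : 0 ≤ Gω)
    (hωlip : ∀ x ∈ K, ∀ y ∈ K, dualNorm d N (ω' x - ω' y) ≤ Gω * N (x - y))
    -- x₀ ∈ K, ℓ convex with subgradient g at x₀ relative to K, N_*(g) ≤ G_ℓ
    (x₀ : Euc d) (hx₀ : x₀ ∈ K)
    (ℓ : Euc d → ℝ) (hℓconv : ConvexOn ℝ Set.univ ℓ)
    (g : Euc d) (hsub : ∀ z ∈ K, ℓ z ≥ ℓ x₀ + ⟪g, z - x₀⟫)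
    (Gℓ : ℝ) (hGℓ : 0 ≤ Gℓ) (hg : dualNorm d N g ≤ Gℓ)
    -- r convex, step size η > 0
    (r : Euc d → ℝ) (hrconv : ConvexOn ℝ Set.univ r)
    (η : ℝ) (hη : 0 < η)
    (F : Euc d → ℝ)
    (hF : ∀ u, F u = ⟪g, u⟫ + r u + 1 / η * V u x₀)
    (ystar : Euc d) (hystarK : ystar ∈ K)
    (hmin : ∀ u ∈ K, F ystar ≤ F u) :
    ∀ x ∈ K, ∀ y ∈ K,
      ℓ x₀ - ℓ x + r ystar - r x ≤
        1 / η * (V x x₀ - V x y) + (Gℓ + 2 / η * Gω * DK) * N (y - ystar)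
          + η / (2 * σ) * Gℓ ^ 2 := by
  intro x hx y hy
  have hD := dual_le d N hN_add hN_smul hN_pos hd
  have hN0 : ∀ z, 0 ≤ N z := by
    intro z
    by_cases h0 : z = 0
    · have := hN_smul 0 0
      simp at this
      simp [h0, this]
    · exact (hN_pos z h0).le
  have hNsub : ∀ a b, N (a - b) = N (b - a) := by
    intro a b
    have := hN_smul (-1) (b - a)
    simpa using this
  have hDK0 : 0 ≤ DK := (hN0 _).trans (hDK x hx y hy)
  have hlip : ∀ a ∈ K, ∀ b ∈ K, ∀ v, ⟪ω' a - ω' b, v⟫ ≤ Gω * N (a - b) * N v :=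
    fun a ha b hb v => (hD _ v).trans (mul_le_mul_of_nonneg_right (hωlip a ha b hb) (hN0 v))
  -- first-order optimality
  have hopt : 0 ≤ η * (⟪g, x - ystar⟫ + r x - r ystar) + ⟪ω' ystar - ω' x₀, x - ystar⟫ := by
    set v := x - ystar with hv
    set C := Gω * N v * N v with hC
    have hC0 : 0 ≤ C := mul_nonneg (mul_nonneg hGω (hN0 v)) (hN0 v)
    have key : ∀ t : ℝ, 0 < t → t ≤ 1 →
        0 ≤ η * (⟪g, v⟫ + r x - r ystar) + ⟪ω' ystar - ω' x₀, v⟫ + t * C := by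
      intro t ht ht1
      have hu : ystar + t • v ∈ K := hKconv.add_smul_sub_mem hystarK hx ⟨ht.le, ht1⟩
      have h1 := hmin _ hu
      have h2 : r (ystar + t • v) ≤ (1 - t) * r ystar + t * r x := by
        have := hrconv.2 (Set.mem_univ ystar) (Set.mem_univ x) (sub_nonneg.2 ht1) ht.le (by ring)
        have e : (1 - t) • ystar + t • x = ystar + t • v := by rw [hv]; module
        rw [e] at this
        simpa using this
      have h3 := hstrong _ hystarK _ hu
      have h4 := hlip _ hu _ hystarK v
      have e1 : ystar + t • v - ystar = t • v := by abel
      have e2 : ystar - (ystar + t • v) = -(t • v) := by abel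
      have e3 : ystar + t • v - x₀ = (ystar - x₀) + t • v := by abel
      rw [e1, hN_smul, abs_of_pos ht, inner_sub_left] at h4
      rw [e2, inner_neg_right, inner_smul_right] at h3
      have h5 : 0 ≤ σ / 2 * N (-(t • v)) ^ 2 := by positivity
      rw [hF, hF, hV, hV, e3, inner_add_right, inner_add_right, inner_smul_right,
        inner_smul_right] at h1
      have h6 : 0 ≤ t * ⟪g, v⟫ + t * (r x - r ystar)
          + 1 / η * (ω (ystar + t • v) - ω ystar - t * ⟪ω' x₀, v⟫) := by linarith
      have h7 : 0 ≤ η * (t * ⟪g, v⟫ + t * (r x - r ystar))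
          + (ω (ystar + t • v) - ω ystar - t * ⟪ω' x₀, v⟫) := by
        have := mul_nonneg hη.le h6
        rw [mul_add, ← mul_assoc η (1 / η), mul_one_div_cancel hη.ne', one_mul] at this
        exact this
      have h8 := mul_le_mul_of_nonneg_left h4 ht.le
      rw [inner_sub_left]
      refine nonneg_of_mul_nonneg_right (a := t) ?_ ht
      rw [hC]
      linarith
    refine le_of_forall_pos_le_add fun ε hε => ?_
    have ht : 0 < min 1 (ε / (C + 1)) := lt_min one_pos (by positivity)
    have h := key _ ht (min_le_left _ _)
    have h2 : min 1 (ε / (C + 1)) * (C + 1) ≤ ε :=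
      (le_div_iff₀ (by positivity)).1 (min_le_right _ _)
    linarith
  have hs := hsub x hx
  have hsc := hstrong _ hystarK _ hx₀
  have hsc2 := hstrong _ hy _ hystarK
  have hl := hlip _ hystarK _ hy (x - y)
  have hl2 : Gω * N (ystar - y) * N (x - y) ≤ Gω * N (y - ystar) * DK := by
    rw [hNsub ystar y]
    exact mul_le_mul_of_nonneg_left (hDK x hx y hy) (mul_nonneg hGω (hN0 _))
  have hl3 : 0 ≤ Gω * N (y - ystar) * DK := mul_nonneg (mul_nonneg hGω (hN0 _)) hDK0
  have hl4 : 0 ≤ Gℓ * N (y - ystar) := mul_nonneg hGℓ (hN0 _)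
  have hl5 : 0 ≤ σ / 2 * N (y - ystar) ^ 2 := by positivity
  have hg1 : ⟪g, x₀ - ystar⟫ ≤ Gℓ * N (ystar - x₀) := by
    rw [hNsub ystar x₀]
    exact (hD g _).trans (mul_le_mul_of_nonneg_right hg (hN0 _))
  have hy1 : η * (Gℓ * N (ystar - x₀)) ≤
      η * (η / (2 * σ) * Gℓ ^ 2) + σ / 2 * N (ystar - x₀) ^ 2 := by
    have : η * (η / (2 * σ) * Gℓ ^ 2) + σ / 2 * N (ystar - x₀) ^ 2 - η * (Gℓ * N (ystar - x₀))
        = (η * Gℓ - σ * N (ystar - x₀)) ^ 2 / (2 * σ) := by field_simp; ring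
    have h2 : 0 ≤ (η * Gℓ - σ * N (ystar - x₀)) ^ 2 / (2 * σ) := by positivity
    linarith
  have hg2 := mul_le_mul_of_nonneg_left hg1 hη.le
  refine le_of_mul_le_mul_left (a := η) ?_ hη
  have hR : η * (1 / η * (V x x₀ - V x y) + (Gℓ + 2 / η * Gω * DK) * N (y - ystar)
          + η / (2 * σ) * Gℓ ^ 2) = (V x x₀ - V x y) + η * (Gℓ * N (y - ystar))
          + 2 * (Gω * N (y - ystar) * DK) + η * (η / (2 * σ) * Gℓ ^ 2) := by
    field_simp
    ring
  rw [hR, hV, hV]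
  have hl6 := mul_nonneg hη.le hl4
  have hs2 := mul_le_mul_of_nonneg_left hs hη.le
  simp only [inner_sub_left, inner_sub_right] at *
  linarith
end

section
/- Distance of an approximate mirror-descent step to the exact step (Lemma 2(a)): Let K ⊆ E be a nonempty convex set, let ω : E → ℝ be differentiable and σ-strongly convex with respect to N on K (σ > 0), let x₀ ∈ K, g ∈ E, let r : E → ℝ be convex, and let η > 0. Define F(x) = ⟪g, x⟫ + r(x) + (1/η) V_ω(x, x₀). If y* ∈ K minimizes F over K and y ∈ K satisfies F(y) ≤ F(y*) + ρ for some ρ ≥ 0, then N(y − y*) ≤ √(2 η ρ / σ). -/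
open scoped RealInnerProductSpace

/-- **Distance of an approximate mirror-descent step to the exact step (Lemma 2(a)).**
If `ω` is `σ`-strongly convex w.r.t. a norm `N` on a nonempty convex set `K`,
`F x = ⟪g, x⟫ + r x + (1/η) V_ω(x, x₀)` with `r` convex and `η > 0`, `y*` minimizes
`F` over `K` and `y ∈ K` satisfies `F y ≤ F y* + ρ`, then `N(y - y*) ≤ √(2ηρ/σ)`. -/
theorem approx_step_close_to_exact_step
    (d : ℕ) (hd : 1 ≤ d)
    -- N is a norm on ℝ^d
    (N : Euc d → ℝ)
    (hN_add : ∀ x y, N (x + y) ≤ N x + N y)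
    (hN_smul : ∀ (c : ℝ) (x : Euc d), N (c • x) = |c| * N x)
    (hN_pos : ∀ x : Euc d, x ≠ 0 → 0 < N x)
    -- K is a nonempty convex set
    (K : Set (Euc d)) (hKne : K.Nonempty) (hKconv : Convex ℝ K)
    -- ω is differentiable with gradient ω', Bregman divergence V
    (ω : Euc d → ℝ) (ω' : Euc d → Euc d)
    (hgrad : ∀ x, HasGradientAt ω (ω' x) x)
    (V : Euc d → Euc d → ℝ)
    (hV : ∀ x y, V x y = ω x - ω y - ⟪ω' y, x - y⟫)
    -- ω is σ-strongly convex w.r.t. N on K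
    (σ : ℝ) (hσ : 0 < σ)
    (hstrong : ∀ x ∈ K, ∀ y ∈ K, ω x ≥ ω y + ⟪ω' y, x - y⟫ + σ / 2 * N (x - y) ^ 2)
    -- data of the mirror-descent step
    (x₀ : Euc d) (hx₀ : x₀ ∈ K) (g : Euc d)
    (r : Euc d → ℝ) (hrconv : ConvexOn ℝ Set.univ r)
    (η : ℝ) (hη : 0 < η)
    (F : Euc d → ℝ)
    (hF : ∀ u, F u = ⟪g, u⟫ + r u + 1 / η * V u x₀)
    (ystar : Euc d) (hystarK : ystar ∈ K)
    (hmin : ∀ u ∈ K, F ystar ≤ F u)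
    (ρ : ℝ) (hρ : 0 ≤ ρ)
    (y : Euc d) (hyK : y ∈ K) (happrox : F y ≤ F ystar + ρ) :
    N (y - ystar) ≤ Real.sqrt (2 * η * ρ / σ) := by
  set v := y - ystar with hv
  have key : ∀ t : ℝ, 0 < t → t < 1 → (1 - t) * (σ * N v ^ 2) ≤ 2 * η * ρ := by
    intro t ht0 ht1
    have hzK : (1 - t) • ystar + t • y ∈ K :=
      hKconv hystarK hyK (by linarith) ht0.le (by ring)
    have hr := hrconv.2 (Set.mem_univ ystar) (Set.mem_univ y)
      (by linarith : (0:ℝ) ≤ 1 - t) ht0.le (by ring)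
    have hm := hmin _ hzK
    have h1 := hstrong y hyK _ hzK
    have h2 := hstrong ystar hystarK _ hzK
    have hgz : ⟪g, (1 - t) • ystar + t • y⟫ = (1 - t) * ⟪g, ystar⟫ + t * ⟪g, y⟫ := by
      rw [inner_add_right, real_inner_smul_right, real_inner_smul_right]
    have hwz : ⟪ω' x₀, (1 - t) • ystar + t • y - x₀⟫
        = (1 - t) * ⟪ω' x₀, ystar - x₀⟫ + t * ⟪ω' x₀, y - x₀⟫ := by
      simp only [inner_add_right, inner_sub_right, real_inner_smul_right]
      ring
    have e1 : y - ((1 - t) • ystar + t • y) = (1 - t) • v := by rw [hv]; module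
    have e2 : ystar - ((1 - t) • ystar + t • y) = (-t) • v := by rw [hv]; module
    rw [e1, hN_smul, real_inner_smul_right, mul_pow, sq_abs] at h1
    rw [e2, hN_smul, real_inner_smul_right, mul_pow, sq_abs] at h2
    rw [hF, hV] at hm
    rw [hF, hV, hgz, hwz] at hm
    rw [hF, hF, hV, hV] at happrox
    simp only [smul_eq_mul] at hr
    generalize (1 - t) • ystar + t • y = z at *
    generalize ⟪ω' z, v⟫ = p at *
    generalize N v ^ 2 = D at *
    have hω : ω z ≤ t * ω y + (1 - t) * ω ystar - t * (1 - t) * (σ / 2 * D) := by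
      have a1 := mul_le_mul_of_nonneg_left h1 ht0.le
      have a2 := mul_le_mul_of_nonneg_left h2 (by linarith : (0:ℝ) ≤ 1 - t)
      nlinarith
    have hω' := mul_le_mul_of_nonneg_left hω (by positivity : 0 ≤ 1 / η)
    have happ := mul_le_mul_of_nonneg_left happrox ht0.le
    have h3 : t * ((1 / η) * ((1 - t) * (σ / 2 * D))) ≤ t * ρ := by
      linarith
    have h4 := le_of_mul_le_mul_left h3 ht0
    rw [one_div, inv_mul_le_iff₀ hη] at h4
    linarith
  have hA : σ * N v ^ 2 ≤ 2 * η * ρ := by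
    have hB : 0 ≤ 2 * η * ρ := by positivity
    by_contra hcon
    push Not at hcon
    generalize σ * N v ^ 2 = A at *
    have hApos : 0 < A := by linarith
    have hk := key ((A - 2 * η * ρ) / (2 * A)) (div_pos (by linarith) (by linarith))
      (by rw [div_lt_one (by linarith)]; linarith)
    have : (1 - (A - 2 * η * ρ) / (2 * A)) * A = (A + 2 * η * ρ) / 2 := by
      field_simp; ring
    linarith
  apply Real.le_sqrt_of_sq_le
  rw [le_div_iff₀ hσ]
  linarith
end

section
/- Step-size bound for the exact mirror-descent step (Lemma 2(b)): Let K ⊆ E be a nonempty convex set, let ω : E → ℝ be differentiable and σ-strongly convex with respect to N on K (σ > 0), let x₀ ∈ K, let g ∈ E with N_*(g) ≤ G_ℓ, let r : E → ℝ be convex and G_r-Lipschitz with respect to N on K, and let η > 0. If y* ∈ K minimizes F(x) = ⟪g, x⟫ + r(x) + (1/η) V_ω(x, x₀) over K, then N(y* − x₀) ≤ (G_ℓ + G_r) η / σ. -/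
open scoped RealInnerProductSpace

theorem aux_bound (d : ℕ) (hd : 1 ≤ d) (N : Euc d → ℝ)
    (hN_add : ∀ x y, N (x + y) ≤ N x + N y)
    (hN_smul : ∀ (c : ℝ) (x : Euc d), N (c • x) = |c| * N x)
    (hN_pos : ∀ x : Euc d, x ≠ 0 → 0 < N x) :
    ∃ c : ℝ, 0 < c ∧ ∀ x, c * ‖x‖ ≤ N x := by
  have hconv : ConvexOn ℝ Set.univ N := by
    refine ⟨convex_univ, fun x _ y _ a b ha hb _ => ?_⟩
    have h := hN_add (a • x) (b • y)
    rw [hN_smul, hN_smul, abs_of_nonneg ha, abs_of_nonneg hb] at h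
    simpa using h
  have hcont : Continuous N := hconv.locallyLipschitz.continuous
  have : Nonempty (Fin d) := ⟨⟨0, hd⟩⟩
  have hne : (Metric.sphere (0 : Euc d) 1).Nonempty :=
    NormedSpace.sphere_nonempty.2 zero_le_one
  obtain ⟨z, hz, hzmin⟩ := (isCompact_sphere (0 : Euc d) 1).exists_isMinOn hne hcont.continuousOn
  have hz1 : ‖z‖ = 1 := by simpa using hz
  refine ⟨N z, hN_pos z (by rintro rfl; simp at hz1), fun x => ?_⟩
  by_cases hx : x = 0
  · subst hx
    have := hN_smul 0 0
    simp at this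
    simp [this]
  · have hx' : 0 < ‖x‖ := norm_pos_iff.2 hx
    have h : N z ≤ N (‖x‖⁻¹ • x) := hzmin (by simp [norm_smul, hx'.ne'])
    rw [hN_smul, abs_of_pos (inv_pos.2 hx')] at h
    calc N z * ‖x‖ ≤ (‖x‖⁻¹ * N x) * ‖x‖ := by gcongr
      _ = N x := by field_simp

theorem aux_dual (d : ℕ) (hd : 1 ≤ d) (N : Euc d → ℝ)
    (hN_add : ∀ x y, N (x + y) ≤ N x + N y)
    (hN_smul : ∀ (c : ℝ) (x : Euc d), N (c • x) = |c| * N x)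
    (hN_pos : ∀ x : Euc d, x ≠ 0 → 0 < N x)
    (g : Euc d) (G : ℝ) (hg : dualNorm d N g ≤ G) (x : Euc d) (hx : x ≠ 0) :
    ⟪g, x⟫ ≤ G * N x := by
  obtain ⟨c, hc, hcN⟩ := aux_bound d hd N hN_add hN_smul hN_pos
  have hp := hN_pos x hx
  have hbdd : BddAbove ((fun x => ⟪g, x⟫) '' {x : Euc d | N x ≤ 1}) := by
    refine ⟨‖g‖ * c⁻¹, ?_⟩
    rintro _ ⟨y, hy, rfl⟩
    have hy' : c * ‖y‖ ≤ 1 := (hcN y).trans hy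
    have h2 : ‖y‖ ≤ c⁻¹ := by
      rw [← one_div, le_div_iff₀ hc]; linarith
    calc ⟪g, y⟫ ≤ ‖g‖ * ‖y‖ := real_inner_le_norm g y
      _ ≤ ‖g‖ * c⁻¹ := by gcongr
  have h : ⟪g, (N x)⁻¹ • x⟫ ≤ G := by
    refine le_trans (le_csSup hbdd ⟨(N x)⁻¹ • x, ?_, rfl⟩) hg
    simp only [Set.mem_ofPred_eq]
    rw [hN_smul, abs_of_pos (inv_pos.2 hp), inv_mul_cancel₀ hp.ne']
  rw [real_inner_smul_right, inv_mul_le_iff₀ hp] at h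
  linarith

/-- **Step-size bound for the exact mirror-descent step (Lemma 2(b)).**
If `ω` is `σ`-strongly convex w.r.t. a norm `N` on a nonempty convex set `K`,
`N_*(g) ≤ G_ℓ`, `r` is convex and `G_r`-Lipschitz w.r.t. `N` on `K`, `η > 0`, and
`y*` minimizes `F x = ⟪g, x⟫ + r x + (1/η) V_ω(x, x₀)` over `K`, then
`N(y* - x₀) ≤ (G_ℓ + G_r) η / σ`. -/
theorem exact_step_size_bound
    (d : ℕ) (hd : 1 ≤ d)
    -- N is a norm on ℝ^d
    (N : Euc d → ℝ)
    (hN_add : ∀ x y, N (x + y) ≤ N x + N y)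
    (hN_smul : ∀ (c : ℝ) (x : Euc d), N (c • x) = |c| * N x)
    (hN_pos : ∀ x : Euc d, x ≠ 0 → 0 < N x)
    -- K is a nonempty convex set
    (K : Set (Euc d)) (hKne : K.Nonempty) (hKconv : Convex ℝ K)
    -- ω is differentiable with gradient ω', Bregman divergence V
    (ω : Euc d → ℝ) (ω' : Euc d → Euc d)
    (hgrad : ∀ x, HasGradientAt ω (ω' x) x)
    (V : Euc d → Euc d → ℝ)
    (hV : ∀ x y, V x y = ω x - ω y - ⟪ω' y, x - y⟫)
    -- ω is σ-strongly convex w.r.t. N on K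
    (σ : ℝ) (hσ : 0 < σ)
    (hstrong : ∀ x ∈ K, ∀ y ∈ K, ω x ≥ ω y + ⟪ω' y, x - y⟫ + σ / 2 * N (x - y) ^ 2)
    -- data of the mirror-descent step
    (x₀ : Euc d) (hx₀ : x₀ ∈ K)
    (g : Euc d) (Gℓ : ℝ) (hGℓ : 0 ≤ Gℓ) (hg : dualNorm d N g ≤ Gℓ)
    (r : Euc d → ℝ) (hrconv : ConvexOn ℝ Set.univ r)
    (Gr : ℝ) (hGr : 0 ≤ Gr)
    (hrlip : ∀ x ∈ K, ∀ y ∈ K, |r x - r y| ≤ Gr * N (x - y))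
    (η : ℝ) (hη : 0 < η)
    (F : Euc d → ℝ)
    (hF : ∀ u, F u = ⟪g, u⟫ + r u + 1 / η * V u x₀)
    (ystar : Euc d) (hystarK : ystar ∈ K)
    (hmin : ∀ u ∈ K, F ystar ≤ F u) :
    N (ystar - x₀) ≤ (Gℓ + Gr) * η / σ := by
  have hN0 : ystar - x₀ = 0 → N (ystar - x₀) = 0 := by
    intro h
    have := hN_smul 0 0
    simp at this
    rw [h, this]
  by_cases hxy : ystar - x₀ = 0
  · rw [hN0 hxy]; positivity
  have hv : x₀ - ystar ≠ 0 := fun h => hxy (by rw [← neg_sub, h, neg_zero])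
  have hsymm : N (x₀ - ystar) = N (ystar - x₀) := by
    have := hN_smul (-1) (ystar - x₀)
    simpa using this
  have hn := hN_pos _ hxy
  have hdual := aux_dual d hd N hN_add hN_smul hN_pos g Gℓ hg _ hv
  rw [hsymm] at hdual
  set n := N (ystar - x₀) with hn_def
  set v := x₀ - ystar with hv_def
  -- derivative of ω along the segment
  have hline : HasDerivAt (fun t : ℝ => ystar + t • v) v 0 := by
    simpa using ((hasDerivAt_id (0 : ℝ)).smul_const v).const_add ystar
  have hder : HasDerivAt (fun t : ℝ => ω (ystar + t • v)) ⟪ω' ystar, v⟫ 0 := by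
    have h1 : HasFDerivAt ω (InnerProductSpace.toDual ℝ _ (ω' ystar)) (ystar + (0 : ℝ) • v) := by
      simpa using (hgrad ystar).hasFDerivAt
    have h2 := h1.comp_hasDerivAt (0 : ℝ) hline
    rw [InnerProductSpace.toDual_apply_apply] at h2
    exact h2
  have hslope := hder.tendsto_slope_zero_right
  have key : ⟪ω' x₀, v⟫ - η * (Gℓ + Gr) * n ≤ ⟪ω' ystar, v⟫ := by
    refine ge_of_tendsto hslope ?_
    filter_upwards [Ioc_mem_nhdsGT (zero_lt_one (α := ℝ))] with t ht
    obtain ⟨ht0, ht1⟩ := ht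
    have hu : ystar + t • v ∈ K := hKconv.add_smul_sub_mem hystarK hx₀ ⟨ht0.le, ht1⟩
    have h1 := hmin _ hu
    have h2 := le_of_abs_le (hrlip _ hu _ hystarK)
    rw [add_sub_cancel_left, hN_smul, abs_of_pos ht0, hsymm] at h2
    rw [hF, hF, hV, hV] at h1
    have e1 : ystar + t • v - x₀ = (ystar - x₀) + t • v := by abel
    rw [e1, inner_add_right, inner_add_right, real_inner_smul_right, real_inner_smul_right] at h1
    have h3 : t * ⟪g, v⟫ ≤ t * (Gℓ * n) := by gcongr
    have h4 : 0 ≤ t * (Gℓ * n) + Gr * (t * n)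
        + 1 / η * (ω (ystar + t • v) - ω ystar - t * ⟪ω' x₀, v⟫) := by
      linarith
    have h5 : 0 ≤ η * (t * (Gℓ * n) + Gr * (t * n)
        + 1 / η * (ω (ystar + t • v) - ω ystar - t * ⟪ω' x₀, v⟫)) := by positivity
    have h6 : η * (t * (Gℓ * n) + Gr * (t * n)
        + 1 / η * (ω (ystar + t • v) - ω ystar - t * ⟪ω' x₀, v⟫))
        = η * (t * (Gℓ * n) + Gr * (t * n))
        + (ω (ystar + t • v) - ω ystar - t * ⟪ω' x₀, v⟫) := by
      field_simp
    rw [h6] at h5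
    simp only [zero_add, zero_smul, add_zero, smul_eq_mul]
    rw [inv_mul_eq_div, le_div_iff₀ ht0]
    linarith
  have s1 := hstrong _ hx₀ _ hystarK
  have s2 := hstrong _ hystarK _ hx₀
  rw [← hv_def, hsymm] at s1
  have e2 : ystar - x₀ = -v := by rw [hv_def, neg_sub]
  rw [← hn_def, e2, inner_neg_right] at s2
  have h7 : (σ * n) * n ≤ (η * (Gℓ + Gr)) * n := by nlinarith
  have h8 := le_of_mul_le_mul_right h7 hn
  rw [le_div_iff₀ hσ]
  linarith
end

section
/- Network disagreement bound (Lemma 2(c)): Let W(1),…,W(T) be doubly stochastic m×m real matrices whose backward products P(t,τ) = W(t)W(t−1)⋯W(τ) satisfy Σ_{j=1}^{m} |P(t,τ)_{ij} − 1/m| ≤ θ κ^{t−τ} for all 1 ≤ τ ≤ t ≤ T and all i, with θ > 0 and κ ∈ (0,1). Let x_{i,t}, e_{i,t}, ε_{i,t} ∈ E (i ∈ {1,…,m}, t ∈ {1,…,T}) satisfy: x_{1,1} = x_{2,1} = ⋯ = x_{m,1} (common initialization); x_{i,t+1} = Σ_{j=1}^{m} W(t)_{ij} ( x_{j,t} +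 e_{j,t} + ε_{j,t} ); N(e_{j,t}) ≤ √(2 η ρ_t / σ) and N(ε_{j,t}) ≤ (G_ℓ + G_r) η / σ for all j,t, where η > 0, σ > 0, ρ_t ≥ 0, G_ℓ, G_r ≥ 0. Then for every j ∈ {1,…,m}: Σ_{t=1}^{T} Σ_{i=1}^{m} N(x_{i,t} − x_{j,t}) ≤ (2θ/(1−κ)) Σ_{i=1}^{m} N(x_{i,1}) + (2 m θ / (σ (1−κ))) (G_ℓ + G_r) η T + (2 m θ / (1−κ)) √(2/σ) Σ_{t=1}^{T} √(η ρ_t). -/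
/-- The backward product `P(t,τ) = W(t) W(t-1) ⋯ W(τ)` of a sequence of matrices. -/
noncomputable def backProd {m : ℕ} (W : ℕ → Matrix (Fin m) (Fin m) ℝ) (t τ : ℕ) :
    Matrix (Fin m) (Fin m) ℝ :=
  ((List.range (t + 1 - τ)).map fun k => W (t - k)).prod

theorem bp_self {m : ℕ} (W : ℕ → Matrix (Fin m) (Fin m) ℝ) (n : ℕ) :
    backProd W n n = W n := by
  have h : n + 1 - n = 1 := by omega
  simp [backProd, h]

theorem bp_succ {m : ℕ} (W : ℕ → Matrix (Fin m) (Fin m) ℝ) (n τ : ℕ) (h : τ ≤ n) :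
    backProd W (n + 1) τ = W (n + 1) * backProd W n τ := by
  have h1 : n + 1 + 1 - τ = (n + 1 - τ) + 1 := by omega
  unfold backProd
  rw [h1, List.range_succ_eq_map, List.map_cons, List.prod_cons, List.map_map]
  congr 3
  funext k
  simp only [Function.comp]
  congr 1
  omega

theorem unroll {d m T : ℕ} (W : ℕ → Matrix (Fin m) (Fin m) ℝ)
    (hW : ∀ t ∈ Finset.Icc 1 T, ∀ i, ∑ j, W t i j = 1)
    (x u : ℕ → Fin m → Euc d) (c : Euc d) (hc : ∀ i, x 1 i = c)
    (hupd : ∀ t ∈ Finset.Icc 1 T, ∀ i, x (t + 1) i = ∑ j, W t i j • (x t j + u t j)) :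
    ∀ n, n ≤ T → ∀ i, x (n + 1) i =
      c + ∑ τ ∈ Finset.Icc 1 n, ∑ k, backProd W n τ i k • u τ k := by
  intro n
  induction n with
  | zero => intro _ i; simp [hc]
  | succ n ih =>
    intro hn i
    have hmem : n + 1 ∈ Finset.Icc 1 T := by simp; omega
    rw [hupd _ hmem, Finset.sum_Icc_succ_top (by omega), bp_self]
    simp only [smul_add, Finset.sum_add_distrib]
    rw [← add_assoc]
    congr 1
    simp only [ih (by omega), smul_add, Finset.sum_add_distrib]
    rw [← Finset.sum_smul, hW _ hmem, one_smul]
    congr 1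
    simp only [Finset.smul_sum]
    rw [Finset.sum_comm]
    refine Finset.sum_congr rfl fun τ hτ => ?_
    rw [Finset.mem_Icc] at hτ
    rw [Finset.sum_comm, bp_succ W n τ hτ.2]
    refine Finset.sum_congr rfl fun k _ => ?_
    rw [Matrix.mul_apply, Finset.sum_smul]
    simp only [smul_smul]

theorem geo (κ : ℝ) (b : ℕ → ℝ) (n : ℕ) :
    (1 - κ) * ∑ t ∈ Finset.Icc 1 n, ∑ τ ∈ Finset.Icc 1 t, κ ^ (t - τ) * b τ =
      ∑ τ ∈ Finset.Icc 1 n, b τ - κ * ∑ τ ∈ Finset.Icc 1 n, κ ^ (n - τ) * b τ := by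
  induction n with
  | zero => simp
  | succ n ih =>
    have hS : ∑ τ ∈ Finset.Icc 1 (n+1), κ ^ (n + 1 - τ) * b τ =
        κ * ∑ τ ∈ Finset.Icc 1 n, κ ^ (n - τ) * b τ + b (n+1) := by
      rw [Finset.sum_Icc_succ_top (by omega), Finset.mul_sum]
      congr 1
      · refine Finset.sum_congr rfl fun τ hτ => ?_
        rw [Finset.mem_Icc] at hτ
        rw [show n + 1 - τ = (n - τ) + 1 by omega, pow_succ]
        ring
      · simp
    rw [Finset.sum_Icc_succ_top (by omega), mul_add, ih, hS,
      Finset.sum_Icc_succ_top (by omega)]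
    ring

theorem N_sum {d : ℕ} {ι : Type*} (N : Euc d → ℝ)
    (hN_add : ∀ x y, N (x + y) ≤ N x + N y) (h0 : N 0 = 0) (s : Finset ι) (f : ι → Euc d) :
    N (∑ i ∈ s, f i) ≤ ∑ i ∈ s, N (f i) :=
  Finset.le_sum_of_subadditive N h0.le hN_add s f

/-- **Network disagreement bound (Lemma 2(c)).**
Let `W(1), …, W(T)` be doubly stochastic matrices with geometrically mixing backward
products, and let iterates with common initialization satisfy
`x_{i,t+1} = Σ_j W(t)_{ij}(x_{j,t} + e_{j,t} + ε_{j,t})` with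
`N(e_{j,t}) ≤ √(2ηρ_t/σ)` and `N(ε_{j,t}) ≤ (G_ℓ + G_r)η/σ`.  Then for every `j`:
`Σ_{t=1}^T Σ_i N(x_{i,t} - x_{j,t}) ≤ (2θ/(1-κ)) Σ_i N(x_{i,1})
  + (2mθ/(σ(1-κ)))(G_ℓ+G_r) η T + (2mθ/(1-κ)) √(2/σ) Σ_{t=1}^T √(η ρ_t)`. -/
theorem network_disagreement_bound
    (d m T : ℕ) (hd : 1 ≤ d) (hm : 1 ≤ m) (hT : 1 ≤ T)
    -- N is a norm on ℝ^d
    (N : Euc d → ℝ)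
    (hN_add : ∀ x y, N (x + y) ≤ N x + N y)
    (hN_smul : ∀ (c : ℝ) (x : Euc d), N (c • x) = |c| * N x)
    (hN_pos : ∀ x : Euc d, x ≠ 0 → 0 < N x)
    -- W(1), …, W(T) are doubly stochastic
    (W : ℕ → Matrix (Fin m) (Fin m) ℝ)
    (hW : ∀ t ∈ Finset.Icc 1 T,
      (∀ i j, 0 ≤ W t i j) ∧ (∀ i, ∑ j, W t i j = 1) ∧ (∀ j, ∑ i, W t i j = 1))
    -- geometric mixing of the backward products
    (θ κ : ℝ) (hθ : 0 < θ) (hκ0 : 0 < κ) (hκ1 : κ < 1)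
    (hP : ∀ τ t : ℕ, 1 ≤ τ → τ ≤ t → t ≤ T → ∀ i,
      ∑ j, |backProd W t τ i j - 1 / (m : ℝ)| ≤ θ * κ ^ (t - τ))
    -- constants
    (η σ : ℝ) (hη : 0 < η) (hσ : 0 < σ)
    (ρ : ℕ → ℝ) (hρ : ∀ t, 0 ≤ ρ t)
    (Gℓ Gr : ℝ) (hGℓ : 0 ≤ Gℓ) (hGr : 0 ≤ Gr)
    -- iterates with common initialization
    (x e ε : ℕ → Fin m → Euc d)
    (hinit : ∀ i i', x 1 i = x 1 i')
    (hupd : ∀ t ∈ Finset.Icc 1 T, ∀ i,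
      x (t + 1) i = ∑ j, W t i j • (x t j + e t j + ε t j))
    (he : ∀ t ∈ Finset.Icc 1 T, ∀ j, N (e t j) ≤ Real.sqrt (2 * η * ρ t / σ))
    (hε : ∀ t ∈ Finset.Icc 1 T, ∀ j, N (ε t j) ≤ (Gℓ + Gr) * η / σ) :
    ∀ j : Fin m,
      ∑ t ∈ Finset.Icc 1 T, ∑ i, N (x t i - x t j) ≤
        2 * θ / (1 - κ) * ∑ i, N (x 1 i)
          + 2 * m * θ / (σ * (1 - κ)) * (Gℓ + Gr) * η * T
          + 2 * m * θ / (1 - κ) * Real.sqrt (2 / σ)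
              * ∑ t ∈ Finset.Icc 1 T, Real.sqrt (η * ρ t) := by
  intro j
  have h0 : N 0 = 0 := by simpa using hN_smul 0 0
  have hnn : ∀ y, 0 ≤ N y := fun y => by
    by_cases h : y = 0
    · rw [h, h0]
    · exact (hN_pos y h).le
  set b : ℕ → ℝ := fun t => Real.sqrt (2 * η * ρ t / σ) + (Gℓ + Gr) * η / σ with hb
  have hb0 : ∀ t, 0 ≤ b t := fun t => by simp only [hb]; positivity
  have hu : ∀ t ∈ Finset.Icc 1 T, ∀ k, N (e t k + ε t k) ≤ b t := fun t ht k =>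
    (hN_add _ _).trans (add_le_add (he t ht k) (hε t ht k))
  have hx := unroll W (fun t ht => (hW t ht).2.1) x (fun t k => e t k + ε t k) (x 1 j)
    (fun i => hinit i j) (fun t ht i => by rw [hupd t ht i]; simp only [add_assoc])
  have hD : ∀ n, n ≤ T → ∀ i, N (x (n + 1) i - x (n + 1) j) ≤
      2 * θ * ∑ τ ∈ Finset.Icc 1 n, κ ^ (n - τ) * b τ := by
    intro n hn i
    rw [hx n hn i, hx n hn j, add_sub_add_left_eq_sub, ← Finset.sum_sub_distrib, Finset.mul_sum]
    refine (N_sum N hN_add h0 _ _).trans (Finset.sum_le_sum fun τ hτ => ?_)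
    rw [Finset.mem_Icc] at hτ
    rw [← Finset.sum_sub_distrib]
    refine (N_sum N hN_add h0 _ _).trans ?_
    have hk : ∀ k ∈ Finset.univ, N (backProd W n τ i k • (e τ k + ε τ k)
        - backProd W n τ j k • (e τ k + ε τ k)) ≤
        (|backProd W n τ i k - 1 / (m : ℝ)| + |backProd W n τ j k - 1 / (m : ℝ)|) * b τ := by
      intro k _
      rw [← sub_smul, hN_smul]
      refine mul_le_mul ?_ (hu τ (by rw [Finset.mem_Icc]; omega) k) (hnn _) (by positivity)
      have := abs_sub (backProd W n τ i k - 1 / (m : ℝ)) (backProd W n τ j k - 1 / (m : ℝ))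
      rwa [sub_sub_sub_cancel_right] at this
    refine (Finset.sum_le_sum hk).trans ?_
    rw [← Finset.sum_mul, Finset.sum_add_distrib]
    have h1 := hP τ n hτ.1 hτ.2 hn i
    have h2 := hP τ n hτ.1 hτ.2 hn j
    calc _ ≤ (θ * κ ^ (n - τ) + θ * κ ^ (n - τ)) * b τ :=
          mul_le_mul_of_nonneg_right (add_le_add h1 h2) (hb0 τ)
      _ = _ := by ring
  have hκ : 0 < 1 - κ := by linarith
  have hS0 : ∀ n, 0 ≤ ∑ τ ∈ Finset.Icc 1 n, κ ^ (n - τ) * b τ := fun n =>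
    Finset.sum_nonneg fun τ _ => mul_nonneg (by positivity) (hb0 τ)
  have hsum : ∀ n, n ≤ T → ∑ t ∈ Finset.Icc 1 (n + 1), ∑ i, N (x t i - x t j) ≤
      2 * m * θ * ∑ t ∈ Finset.Icc 1 n, ∑ τ ∈ Finset.Icc 1 t, κ ^ (t - τ) * b τ := by
    intro n
    induction n with
    | zero => intro _; simp [hinit _ j, h0]
    | succ n ih =>
      intro hn
      rw [Finset.sum_Icc_succ_top (by omega),
        Finset.sum_Icc_succ_top (show 1 ≤ n + 1 by omega) (fun t => ∑ τ ∈ Finset.Icc 1 t, _), mul_add]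
      refine add_le_add (ih (by omega)) ?_
      refine (Finset.sum_le_sum fun i _ => hD (n + 1) hn i).trans (le_of_eq ?_)
      rw [Finset.sum_const, Finset.card_univ, Fintype.card_fin, nsmul_eq_mul]
      ring
  have hle : ∑ t ∈ Finset.Icc 1 T, ∑ i, N (x t i - x t j) ≤
      2 * m * θ * ∑ t ∈ Finset.Icc 1 T, ∑ τ ∈ Finset.Icc 1 t, κ ^ (t - τ) * b τ := by
    refine le_trans ?_ (hsum T le_rfl)
    rw [Finset.sum_Icc_succ_top (by omega)]
    exact le_add_of_nonneg_right (Finset.sum_nonneg fun i _ => hnn _)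
  have hg : ∑ t ∈ Finset.Icc 1 T, ∑ τ ∈ Finset.Icc 1 t, κ ^ (t - τ) * b τ ≤
      (∑ τ ∈ Finset.Icc 1 T, b τ) / (1 - κ) := by
    rw [le_div_iff₀ hκ, mul_comm, geo]
    have := mul_nonneg hκ0.le (hS0 T)
    linarith
  have hbs : ∑ τ ∈ Finset.Icc 1 T, b τ =
      Real.sqrt (2 / σ) * ∑ t ∈ Finset.Icc 1 T, Real.sqrt (η * ρ t)
        + T * ((Gℓ + Gr) * η / σ) := by
    simp only [hb]
    rw [Finset.sum_add_distrib, Finset.mul_sum, Finset.sum_const, Nat.card_Icc, nsmul_eq_mul]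
    congr 1
    refine Finset.sum_congr rfl fun t _ => ?_
    rw [← Real.sqrt_mul (by positivity)]
    congr 1
    ring
  have hinit0 : 0 ≤ 2 * θ / (1 - κ) * ∑ i, N (x 1 i) :=
    mul_nonneg (by positivity) (Finset.sum_nonneg fun i _ => hnn _)
  have hfin := hle.trans (mul_le_mul_of_nonneg_left hg (by positivity : (0:ℝ) ≤ 2 * m * θ))
  rw [hbs] at hfin
  refine hfin.trans ?_
  refine le_trans (le_of_eq ?_) (le_add_of_nonneg_left hinit0 |>.trans (le_of_eq (add_assoc _ _ _).symm))
  field_simp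
  ring
end

section
/- Per-step deviation from the network average under perturbed consensus: Let W(1),…,W(T) be doubly stochastic m×m real matrices whose backward products P(t,τ) = W(t)W(t−1)⋯W(τ) satisfy Σ_{j=1}^{m} |P(t,τ)_{ij} − 1/m| ≤ θ κ^{t−τ} for all 1 ≤ τ ≤ t ≤ T and all i, with θ > 0 and κ ∈ (0,1). Let x_{i,t}, d_{i,t} ∈ E satisfy x_{i,t+1} = Σ_{j=1}^{m} W(t)_{ij} ( x_{j,t} + d_{j,t} ) with N(d_{j,τ}) ≤ D_τ for all j ∈ {1,…,m} and τ ∈ {1,…,T}, and let x̄_t = (1/m) Σ_{i=1}^{m} x_{i,t}. Then for every 1 ≤ t ≤ T: Σ_{i=1}^{m} N( x_{i,t+1} − x̄_{t+1} ) ≤ m θ κ^{t−1} max_{1 ≤ j ≤ m} N(x_{j,1}) + m θ Σ_{τ=1}^{t} κ^{t−τ} D_τ. -/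
theorem backProd_self_aux {m : ℕ} (W : ℕ → Matrix (Fin m) (Fin m) ℝ) (t : ℕ) :
    backProd W t t = W t := by
  simp [backProd]

theorem backProd_succ_aux {m : ℕ} (W : ℕ → Matrix (Fin m) (Fin m) ℝ) (t τ : ℕ) (h : τ ≤ t) :
    backProd W (t + 1) τ = W (t + 1) * backProd W t τ := by
  unfold backProd
  have e : t + 1 + 1 - τ = (t + 1 - τ) + 1 := by omega
  rw [e, List.range_succ_eq_map, List.map_cons, List.prod_cons, List.map_map]
  congr 2
  apply List.map_congr_left
  intro k _
  simp only [Function.comp]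
  congr 1
  omega

theorem mul_smul_aux {m : ℕ} {V : Type*} [AddCommGroup V] [Module ℝ V]
    (A B : Matrix (Fin m) (Fin m) ℝ) (v : Fin m → V) (i : Fin m) :
    ∑ j, A i j • ∑ k, B j k • v k = ∑ k, (A * B) i k • v k := by
  simp only [Finset.smul_sum, Matrix.mul_apply, Finset.sum_smul, smul_smul]
  exact Finset.sum_comm

/-- **Per-step deviation from the network average under perturbed consensus.**
Let `W(1), …, W(T)` be doubly stochastic `m × m` matrices whose backward products satisfy
`Σ_j |P(t,τ)_{ij} - 1/m| ≤ θ κ^{t-τ}`, and let `x_{i,t+1} = Σ_j W(t)_{ij}(x_{j,t} + d_{j,t})`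
with `N(d_{j,τ}) ≤ D_τ`.  With `x̄_t` the network average, for every `1 ≤ t ≤ T`:
`Σ_i N(x_{i,t+1} - x̄_{t+1}) ≤ m θ κ^{t-1} max_j N(x_{j,1}) + m θ Σ_{τ=1}^t κ^{t-τ} D_τ`. -/
theorem perturbed_consensus_average_deviation
    (d m T : ℕ) (hd : 1 ≤ d) (hm : 1 ≤ m) (hT : 1 ≤ T)
    -- N is a norm on ℝ^d
    (N : Euc d → ℝ)
    (hN_add : ∀ x y, N (x + y) ≤ N x + N y)
    (hN_smul : ∀ (c : ℝ) (x : Euc d), N (c • x) = |c| * N x)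
    (hN_pos : ∀ x : Euc d, x ≠ 0 → 0 < N x)
    -- W(1), …, W(T) are doubly stochastic
    (W : ℕ → Matrix (Fin m) (Fin m) ℝ)
    (hW : ∀ t ∈ Finset.Icc 1 T,
      (∀ i j, 0 ≤ W t i j) ∧ (∀ i, ∑ j, W t i j = 1) ∧ (∀ j, ∑ i, W t i j = 1))
    -- geometric mixing of the backward products
    (θ κ : ℝ) (hθ : 0 < θ) (hκ0 : 0 < κ) (hκ1 : κ < 1)
    (hP : ∀ τ t : ℕ, 1 ≤ τ → τ ≤ t → t ≤ T → ∀ i,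
      ∑ j, |backProd W t τ i j - 1 / (m : ℝ)| ≤ θ * κ ^ (t - τ))
    -- perturbed consensus iterates
    (x dvec : ℕ → Fin m → Euc d)
    (hupd : ∀ t ∈ Finset.Icc 1 T, ∀ i, x (t + 1) i = ∑ j, W t i j • (x t j + dvec t j))
    (D : ℕ → ℝ) (hD : ∀ τ ∈ Finset.Icc 1 T, ∀ j, N (dvec τ j) ≤ D τ)
    (xbar : ℕ → Euc d) (hxbar : ∀ t, xbar t = ((m : ℝ))⁻¹ • ∑ i, x t i) :
    ∀ t : ℕ, 1 ≤ t → t ≤ T →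
      ∑ i, N (x (t + 1) i - xbar (t + 1)) ≤
        m * θ * κ ^ (t - 1) * (⨆ j, N (x 1 j))
          + m * θ * ∑ τ ∈ Finset.Icc 1 t, κ ^ (t - τ) * D τ := by
  have hN0 : N 0 = 0 := by simpa using hN_smul 0 0
  have hNn : ∀ v, 0 ≤ N v := by
    intro v
    by_cases hv : v = 0
    · rw [hv, hN0]
    · exact (hN_pos v hv).le
  have hNsum : ∀ {ι : Type} (s : Finset ι) (f : ι → Euc d), N (∑ i ∈ s, f i) ≤ ∑ i ∈ s, N (f i) := by
    intro ι s f
    exact Finset.le_sum_of_subadditive N hN0.le hN_add s f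
  have hcomb : ∀ (a : Fin m → ℝ) (v : Fin m → Euc d) (b M : ℝ), 0 ≤ M → (∀ j, N (v j) ≤ M) →
      ∑ j, |a j| ≤ b → N (∑ j, a j • v j) ≤ b * M := by
    intro a v b M hM hv hb
    calc N (∑ j, a j • v j) ≤ ∑ j, N (a j • v j) := hNsum _ _
      _ = ∑ j, |a j| * N (v j) := by simp only [hN_smul]
      _ ≤ ∑ j, |a j| * M :=
          Finset.sum_le_sum fun j _ => mul_le_mul_of_nonneg_left (hv j) (abs_nonneg _)
      _ = (∑ j, |a j|) * M := by rw [Finset.sum_mul]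
      _ ≤ b * M := mul_le_mul_of_nonneg_right hb hM
  have hrep : ∀ t : ℕ, 1 ≤ t → t ≤ T → ∀ i, x (t + 1) i =
      ∑ j, backProd W t 1 i j • x 1 j
        + ∑ τ ∈ Finset.Icc 1 t, ∑ j, backProd W t τ i j • dvec τ j := by
    intro t ht
    induction t, ht using Nat.le_induction with
    | base =>
      intro h i
      rw [hupd 1 (by simp [h]) i]
      simp [backProd_self_aux, smul_add, Finset.sum_add_distrib]
    | succ t ht ih =>
      intro h i
      rw [hupd (t + 1) (by simp [h]) i, Finset.sum_Icc_succ_top (by omega),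
        backProd_self_aux, backProd_succ_aux W t 1 ht, ← mul_smul_aux, ← add_assoc]
      simp only [smul_add, Finset.sum_add_distrib]
      congr 1
      simp only [ih (by omega), smul_add, Finset.sum_add_distrib]
      congr 1
      simp only [Finset.smul_sum (s := Finset.Icc 1 t)]
      rw [Finset.sum_comm]
      refine Finset.sum_congr rfl fun τ hτ => ?_
      rw [backProd_succ_aux W t τ (Finset.mem_Icc.1 hτ).2, ← mul_smul_aux]
  have hsumx : ∀ t : ℕ, t ≤ T → ∑ i, x (t + 1) i =
      ∑ j, x 1 j + ∑ τ ∈ Finset.Icc 1 t, ∑ j, dvec τ j := by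
    intro t
    induction t with
    | zero => simp
    | succ t ih =>
      intro h
      have hmem : t + 1 ∈ Finset.Icc 1 T := by simp [h]
      rw [Finset.sum_Icc_succ_top (by omega), ← add_assoc, ← ih (by omega)]
      simp only [hupd (t + 1) hmem]
      rw [Finset.sum_comm, ← Finset.sum_add_distrib]
      refine Finset.sum_congr rfl fun j _ => ?_
      rw [← Finset.sum_smul, (hW _ hmem).2.2 j, one_smul]
  intro t ht1 htT
  have hS0 : 0 ≤ ⨆ j, N (x 1 j) := Real.iSup_nonneg fun j => hNn _
  have hS : ∀ j, N (x 1 j) ≤ ⨆ j, N (x 1 j) :=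
    fun j => le_ciSup (f := fun j => N (x 1 j)) (Set.finite_range _).bddAbove j
  have hmain : ∀ i, N (x (t + 1) i - xbar (t + 1)) ≤ θ * κ ^ (t - 1) * (⨆ j, N (x 1 j))
      + θ * ∑ τ ∈ Finset.Icc 1 t, κ ^ (t - τ) * D τ := by
    intro i
    have e : x (t + 1) i - xbar (t + 1) =
        ∑ j, (backProd W t 1 i j - 1 / (m : ℝ)) • x 1 j
          + ∑ τ ∈ Finset.Icc 1 t, ∑ j, (backProd W t τ i j - 1 / (m : ℝ)) • dvec τ j := by
      rw [hxbar, hsumx t htT, hrep t ht1 htT]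
      simp only [sub_smul, Finset.sum_sub_distrib, smul_add, Finset.smul_sum, one_div]
      abel
    rw [e]
    refine (hN_add _ _).trans (add_le_add ?_ ?_)
    · exact hcomb _ _ _ _ hS0 hS (hP 1 t le_rfl ht1 htT i)
    · refine (hNsum _ _).trans ?_
      rw [Finset.mul_sum]
      refine Finset.sum_le_sum fun τ hτ => ?_
      obtain ⟨h1, h2⟩ := Finset.mem_Icc.1 hτ
      have hm' : τ ∈ Finset.Icc 1 T := Finset.mem_Icc.2 ⟨h1, h2.trans htT⟩
      rw [← mul_assoc]
      exact hcomb _ _ _ _ ((hNn _).trans (hD τ hm' i)) (hD τ hm') (hP τ t h1 h2 htT i)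
  refine (Finset.sum_le_sum fun i _ => hmain i).trans (le_of_eq ?_)
  rw [Finset.sum_const, Finset.card_univ, Fintype.card_fin, nsmul_eq_mul]
  ring
end

section
/- The two-point sphere estimator is an unbiased gradient estimator of the ball-smoothed function (Lemma 3(c)): Let ℓ : ℝ^d → ℝ be Lipschitz continuous with respect to the Euclidean norm (d ≥ 1), let δ > 0, and let ℓ̆(x) = ⨍_{B} ℓ(x + δ v) dv be the average of v ↦ ℓ(x + δv) over the closed Euclidean unit ball B with respect to Lebesgue measure. Then ℓ̆ is differentiable on ℝ^d and, for every x ∈ ℝ^d, its gradient equals ∇ℓ̆(x) = (d/δ) ∫_{S^{d−1}} ℓ(x + δ u) u dμ(u) = ∫_{S^{d−1}} (d/(2δ)) ( ℓ(x + δ u) − ℓ(x − δ u) ) u dμ(u), where μ is the uniform probability measure on the Euclidean unit sphere S^{d−1}. -/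
open MeasureTheory
open scoped RealInnerProductSpace

open scoped Topology
lemma charFun_radial {d : ℕ} (μ : Measure (Euc d))
    (hμinv : ∀ R : Euc d ≃ₗᵢ[ℝ] Euc d, μ.map (⇑R) = μ) (s t : Euc d) (h : ‖s‖ = ‖t‖) :
    charFun μ s = charFun μ t := by
  let R : Euc d ≃ₗᵢ[ℝ] Euc d := (ℝ ∙ (s - t))ᗮ.reflection
  have hR : R s = t := Submodule.reflection_sub h
  rw [← hR]
  conv_rhs => rw [← hμinv R]
  rw [charFun_apply, charFun_apply, integral_map R.continuous.aemeasurable]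
  · simp
  · exact Continuous.aestronglyMeasurable (by fun_prop)

lemma charFun_avg {d : ℕ} (μ ν : Measure (Euc d)) [IsProbabilityMeasure μ] [IsProbabilityMeasure ν]
    (hν : ∀ᵐ v ∂ν, ‖v‖ = 1)
    (hμinv : ∀ R : Euc d ≃ₗᵢ[ℝ] Euc d, μ.map (⇑R) = μ) (t : Euc d) :
    charFun μ t = ∫ v, ∫ u, Complex.exp (inner ℝ u (‖t‖ • v) * Complex.I) ∂μ ∂ν := by
  have : ∀ᵐ v ∂ν, ∫ u, Complex.exp (inner ℝ u (‖t‖ • v) * Complex.I) ∂μ = charFun μ t := by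
    filter_upwards [hν] with v hv
    rw [← charFun_apply]
    exact charFun_radial μ hμinv _ _ (by simp [norm_smul, hv])
  rw [integral_congr_ae this]
  simp

lemma sphere_unique {d : ℕ} (μ ν : Measure (Euc d)) [IsProbabilityMeasure μ]
    [IsProbabilityMeasure ν]
    (hμ : ∀ᵐ v ∂μ, ‖v‖ = 1) (hν : ∀ᵐ v ∂ν, ‖v‖ = 1)
    (hμinv : ∀ R : Euc d ≃ₗᵢ[ℝ] Euc d, μ.map (⇑R) = μ)
    (hνinv : ∀ R : Euc d ≃ₗᵢ[ℝ] Euc d, ν.map (⇑R) = ν) : μ = ν := by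
  apply Measure.ext_of_charFun
  ext t
  rw [charFun_avg μ ν hν hμinv, charFun_avg ν μ hμ hνinv, integral_integral_swap]
  · simp_rw [inner_smul_right, real_inner_comm]
  · refine Integrable.of_bound (C := 1) (Continuous.aestronglyMeasurable ?_) ?_
    · simp only [Function.uncurry_def]; fun_prop
    · refine Filter.Eventually.of_forall fun p => ?_
      simp only [Function.uncurry_def]
      rw [Complex.norm_exp_ofReal_mul_I]
/-- open shell -/
def shell (d : ℕ) (ε : ℝ) : Set (Euc d) := Metric.ball 0 (1 + ε) \ Metric.closedBall 0 1

lemma mem_shell {d : ℕ} {ε : ℝ} {v : Euc d} : v ∈ shell d ε ↔ ‖v‖ < 1 + ε ∧ 1 < ‖v‖ := by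
  simp [shell]

lemma measurableSet_shell (d : ℕ) (ε : ℝ) : MeasurableSet (shell d ε) :=
  measurableSet_ball.diff measurableSet_closedBall

lemma volume_shell {d : ℕ} (hd : 1 ≤ d) {ε : ℝ} (hε : 0 < ε) :
    volume.real (shell d ε) =
      ((1 + ε) ^ d - 1) * volume.real (Metric.closedBall (0 : Euc d) 1) := by
  have : Nonempty (Fin d) := ⟨⟨0, hd⟩⟩
  have : Nontrivial (Euc d) := inferInstance
  rw [shell, measureReal_sdiff (Metric.closedBall_subset_ball (by linarith))
    measurableSet_closedBall measure_ball_lt_top.ne,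
    ← Measure.addHaar_real_closedBall_eq_addHaar_real_ball,
    Measure.addHaar_real_closedBall' _ _ (by linarith)]
  simp; ring

lemma volB_pos (d : ℕ) : 0 < volume.real (Metric.closedBall (0 : Euc d) 1) :=
  ENNReal.toReal_pos (Metric.measure_closedBall_pos _ _ one_pos).ne' measure_closedBall_lt_top.ne

lemma shell_integral {d : ℕ} (hd : 1 ≤ d) {ε : ℝ} (hε : 0 < ε)
    (μ : Measure (Euc d)) [IsProbabilityMeasure μ] (hμ : ∀ᵐ v ∂μ, ‖v‖ = 1)
    (hμinv : ∀ R : Euc d ≃ₗᵢ[ℝ] Euc d, μ.map (⇑R) = μ)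
    (F : Euc d → ℝ) (hF : Continuous F) :
    ∫ v in shell d ε, F (‖v‖⁻¹ • v) = volume.real (shell d ε) * ∫ u, F u ∂μ := by
  have hpos : 0 < volume.real (shell d ε) := by
    rw [volume_shell hd hε]
    refine mul_pos (sub_pos.2 (one_lt_pow₀ (by linarith) (by omega))) (volB_pos d)
  have h0 : volume (shell d ε) ≠ 0 := fun h => by simp [measureReal_def, h] at hpos
  have hT : volume (shell d ε) ≠ ⊤ := fun h => by simp [measureReal_def, h] at hpos
  let N : Euc d → Euc d := fun v => ‖v‖⁻¹ • v
  have hN : Measurable N := by fun_prop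
  let c : Measure (Euc d) := (volume (shell d ε))⁻¹ • volume.restrict (shell d ε)
  have : IsProbabilityMeasure c := ⟨by simp [c, ENNReal.inv_mul_cancel h0 hT]⟩
  have : IsProbabilityMeasure (c.map N) := Measure.isProbabilityMeasure_map hN.aemeasurable
  have hmem : ∀ᵐ v ∂c, v ∈ shell d ε :=
    Measure.ae_smul_measure (ae_restrict_mem (measurableSet_shell d ε)) _
  have key : μ = c.map N := by
    apply sphere_unique μ (c.map N) hμ _ hμinv
    · intro R
      have h1 : c.map R = c := by
        have h2 := (R.measurePreserving.restrict_preimage (measurableSet_shell d ε)).map_eq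
        have h3 : R ⁻¹' (shell d ε) = shell d ε := by
          ext v; simp [mem_shell]
        rw [h3] at h2
        simp only [c, Measure.map_smul]
        rw [h2]
      have hRm : Measurable R := R.continuous.measurable
      rw [Measure.map_map hRm hN]
      have h4 : (R ∘ N) = N ∘ R := by
        ext1 v; simp [N]
      rw [h4, ← Measure.map_map hN hRm, h1]
    · rw [ae_map_iff hN.aemeasurable (measurableSet_eq_fun (by fun_prop) (by fun_prop))]
      filter_upwards [hmem] with v hv
      have : 0 < ‖v‖ := by linarith [(mem_shell.1 hv).2]
      simp [N, norm_smul, this.ne']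
  rw [key, integral_map hN.aemeasurable hF.aestronglyMeasurable]
  simp only [c, integral_smul_measure, N, smul_eq_mul, ENNReal.toReal_inv]
  rw [← measureReal_def, ← mul_assoc, mul_inv_cancel₀ hpos.ne', one_mul]

/-- cutoff -/
noncomputable def cut (d : ℕ) (ε : ℝ) (v : Euc d) : ℝ := max 0 (min 1 (1 - ε⁻¹ * (‖v‖ - 1)))

lemma cut_lip (d : ℕ) {ε : ℝ} (hε : 0 < ε) : LipschitzWith (Real.toNNReal ε⁻¹) (cut d ε) := by
  have h : LipschitzWith (Real.toNNReal ε⁻¹) (fun v : Euc d => 1 - ε⁻¹ * (‖v‖ - 1)) := by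
    apply LipschitzWith.of_dist_le_mul
    intro x y
    rw [Real.coe_toNNReal _ (by positivity), Real.dist_eq, dist_eq_norm]
    have : 1 - ε⁻¹ * (‖x‖ - 1) - (1 - ε⁻¹ * (‖y‖ - 1)) = - (ε⁻¹ * (‖x‖ - ‖y‖)) := by ring
    rw [this, abs_neg, abs_mul, abs_of_pos (by positivity)]
    gcongr
    exact abs_norm_sub_norm_le x y
  exact (h.const_min 1).const_max 0

lemma cut_zero {d : ℕ} {ε : ℝ} (hε : 0 < ε) {v : Euc d} (hv : 1 + ε ≤ ‖v‖) : cut d ε v = 0 := by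
  have : 1 ≤ ε⁻¹ * (‖v‖ - 1) := by
    rw [inv_mul_eq_div, le_div_iff₀ hε]; linarith
  rw [cut, max_eq_left]
  exact (min_le_right _ _).trans (by linarith)

lemma cut_one {d : ℕ} {ε : ℝ} (hε : 0 < ε) {v : Euc d} (hv : ‖v‖ ≤ 1) : cut d ε v = 1 := by
  have : ε⁻¹ * (‖v‖ - 1) ≤ 0 := mul_nonpos_of_nonneg_of_nonpos (by positivity) (by linarith)
  rw [cut, min_eq_left (by linarith)]; simp

lemma cut_mem {d : ℕ} {ε : ℝ} {v : Euc d} : 0 ≤ cut d ε v ∧ cut d ε v ≤ 1 :=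
  ⟨le_max_left _ _, max_le zero_le_one (min_le_left _ _)⟩

lemma cut_shell {d : ℕ} {ε : ℝ} (hε : 0 < ε) {v : Euc d} (hv : v ∈ shell d ε) :
    cut d ε v = 1 - ε⁻¹ * (‖v‖ - 1) := by
  obtain ⟨h1, h2⟩ := mem_shell.1 hv
  have h3 : 0 ≤ ε⁻¹ * (‖v‖ - 1) := mul_nonneg (by positivity) (by linarith)
  have h4 : ε⁻¹ * (‖v‖ - 1) ≤ 1 := by
    rw [inv_mul_eq_div, div_le_iff₀ hε]; linarith
  rw [cut, min_eq_right (by linarith), max_eq_right (by linarith)]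

lemma cut_compact (d : ℕ) {ε : ℝ} (hε : 0 < ε) : HasCompactSupport (cut d ε) := by
  apply HasCompactSupport.intro (isCompact_closedBall (0 : Euc d) (1 + ε))
  intro v hv
  apply cut_zero hε
  simp at hv
  exact hv.le

lemma cut_lineDeriv {d : ℕ} (hd : 1 ≤ d) {ε : ℝ} (hε : 0 < ε) (e : Euc d) :
    ∀ᵐ v : Euc d, lineDeriv ℝ (cut d ε) v (-e) =
      (shell d ε).indicator (fun v => ε⁻¹ * (inner ℝ (‖v‖⁻¹ • v) e)) v := by
  have : Nonempty (Fin d) := ⟨⟨0, hd⟩⟩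
  have n1 : ∀ᵐ v : Euc d, v ∉ Metric.sphere (0 : Euc d) 1 :=
    measure_eq_zero_iff_ae_notMem.1 (Measure.addHaar_sphere _ _ _)
  have n2 : ∀ᵐ v : Euc d, v ∉ Metric.sphere (0 : Euc d) (1 + ε) :=
    measure_eq_zero_iff_ae_notMem.1 (Measure.addHaar_sphere _ _ _)
  filter_upwards [n1, n2] with v h1 h2
  simp only [mem_sphere_iff_norm, sub_zero] at h1 h2
  by_cases hv : v ∈ shell d ε
  · rw [Set.indicator_of_mem hv]
    have ho : IsOpen (shell d ε) := by
      rw [shell, Set.sdiff_eq]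
      exact Metric.isOpen_ball.inter Metric.isClosed_closedBall.isOpen_compl
    have he : cut d ε =ᶠ[𝓝 v] fun v => 1 - ε⁻¹ * (‖v‖ - 1) := by
      filter_upwards [ho.mem_nhds hv] with w hw using cut_shell hε hw
    rw [he.lineDeriv_eq]
    have hpos : 0 < ‖v‖ := by linarith [(mem_shell.1 hv).2]
    have hn : HasFDerivAt (fun v : Euc d => ‖v‖) (‖v‖⁻¹ • innerSL ℝ v) v := by
      have := (hasStrictFDerivAt_norm_sq v).hasFDerivAt.sqrt (by positivity)
      simp only [Real.sqrt_sq (norm_nonneg _)] at this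
      have hh : (1 / (2 * ‖v‖)) • 2 • innerSL ℝ v = ‖v‖⁻¹ • innerSL ℝ v := by
        rw [← Nat.cast_smul_eq_nsmul ℝ, smul_smul]
        congr 1
        push_cast
        field_simp
      rwa [hh] at this
    have := (((hn.sub_const 1).const_mul ε⁻¹).const_sub 1).hasLineDerivAt (-e)
    rw [this.lineDeriv]
    simp [inner_smul_left]
  · rw [Set.indicator_of_notMem hv]
    rw [mem_shell] at hv
    push Not at hv
    rcases lt_or_ge ‖v‖ 1 with h | h
    · have he : cut d ε =ᶠ[𝓝 v] fun v => 1 := by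
        filter_upwards [(isOpen_lt continuous_norm continuous_const).mem_nhds h] with w hw
        exact cut_one hε (le_of_lt hw)
      rw [he.lineDeriv_eq]
      simp [lineDeriv]
    · have h3 : 1 + ε < ‖v‖ := by
        rcases lt_or_ge ‖v‖ (1 + ε) with h' | h'
        · exact absurd (le_antisymm (hv h') h) h1
        · exact lt_of_le_of_ne h' (Ne.symm h2)
      have he : cut d ε =ᶠ[𝓝 v] fun v => 0 := by
        filter_upwards [(isOpen_lt continuous_const continuous_norm).mem_nhds h3] with w hw
        exact cut_zero hε (le_of_lt hw)
      rw [he.lineDeriv_eq]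
      simp [lineDeriv]
lemma cut_parts {d : ℕ} (hd : 1 ≤ d) {ε : ℝ} (hε : 0 < ε) (e : Euc d) {C : NNReal}
    (f : Euc d → ℝ) (hf : LipschitzWith C f) :
    ∫ v, lineDeriv ℝ f v e * cut d ε v =
      ε⁻¹ * ∫ v in shell d ε, inner ℝ (‖v‖⁻¹ • v) e * f v := by
  rw [hf.integral_lineDeriv_mul_eq (cut_lip d hε) (cut_compact d hε) e,
    ← integral_const_mul, ← integral_indicator (measurableSet_shell d ε)]
  apply integral_congr_ae
  filter_upwards [cut_lineDeriv hd hε e] with v hv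
  rw [hv]
  by_cases h : v ∈ shell d ε <;> simp [h, mul_assoc]

lemma lhs_tendsto {d : ℕ} (e : Euc d) {C : NNReal}
    (f : Euc d → ℝ) (hf : LipschitzWith C f) :
    Filter.Tendsto (fun ε => ∫ v, lineDeriv ℝ f v e * cut d ε v) (𝓝[>] 0)
      (𝓝 (∫ v in Metric.closedBall 0 1, lineDeriv ℝ f v e)) := by
  rw [← integral_indicator measurableSet_closedBall]
  have hpos : ∀ᶠ ε : ℝ in 𝓝[>] 0, 0 < ε := self_mem_nhdsWithin
  have hle : ∀ᶠ ε : ℝ in 𝓝[>] 0, ε < 1 :=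
    nhdsWithin_le_nhds (Iio_mem_nhds one_pos)
  apply tendsto_integral_filter_of_dominated_convergence
    ((Metric.closedBall (0 : Euc d) 2).indicator (fun _ => C * ‖e‖))
  · filter_upwards [hpos] with ε hε
    exact (aestronglyMeasurable_lineDeriv hf.continuous _).mul
      (cut_lip d hε).continuous.aestronglyMeasurable
  · filter_upwards [hpos, hle] with ε h0 h1
    refine Filter.Eventually.of_forall fun v => ?_
    by_cases hv : v ∈ Metric.closedBall (0 : Euc d) 2
    · rw [Set.indicator_of_mem hv, norm_mul]
      calc _ ≤ (C * ‖e‖) * 1 := by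
            gcongr
            · exact norm_lineDeriv_le_of_lipschitz ℝ hf
            · rw [Real.norm_of_nonneg cut_mem.1]; exact cut_mem.2
        _ = _ := mul_one _
    · rw [Set.indicator_of_notMem hv, cut_zero h0]
      · simp
      · simp at hv; linarith
  · exact (integrable_indicator_iff measurableSet_closedBall).2
      (integrableOn_const measure_closedBall_lt_top.ne)
  · refine Filter.Eventually.of_forall fun v => ?_
    apply tendsto_const_nhds.congr'
    by_cases hv : ‖v‖ ≤ 1
    · filter_upwards [hpos] with ε h0
      rw [cut_one h0 hv, Set.indicator_of_mem (by simpa using hv), mul_one]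
    · push Not at hv
      have : ∀ᶠ ε : ℝ in 𝓝[>] 0, ε < ‖v‖ - 1 :=
        nhdsWithin_le_nhds (Iio_mem_nhds (by linarith))
      filter_upwards [hpos, this] with ε h0 h1
      rw [cut_zero h0 (by linarith), Set.indicator_of_notMem (by simpa using hv), mul_zero]

lemma vol_tendsto {d : ℕ} (hd : 1 ≤ d) :
    Filter.Tendsto (fun ε : ℝ => ε⁻¹ * volume.real (shell d ε)) (𝓝[>] 0)
      (𝓝 (d * volume.real (Metric.closedBall (0 : Euc d) 1))) := by
  have h : HasDerivAt (fun x : ℝ => (1 + x) ^ d) (d : ℝ) 0 := by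
    have h := ((hasDerivAt_id (0 : ℝ)).const_add 1).fun_pow d
    simpa using h
  have h2 := (h.tendsto_slope_zero_right).mul_const (volume.real (Metric.closedBall (0 : Euc d) 1))
  refine h2.congr' ?_
  filter_upwards [self_mem_nhdsWithin] with ε hε
  rw [volume_shell hd hε]
  simp [mul_assoc]

lemma rhs_tendsto {d : ℕ} (hd : 1 ≤ d) (e : Euc d) {C : NNReal}
    (f : Euc d → ℝ) (hf : LipschitzWith C f)
    (μ : Measure (Euc d)) [IsProbabilityMeasure μ] (hμ : ∀ᵐ v ∂μ, ‖v‖ = 1)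
    (hμinv : ∀ R : Euc d ≃ₗᵢ[ℝ] Euc d, μ.map (⇑R) = μ) :
    Filter.Tendsto (fun ε => ε⁻¹ * ∫ v in shell d ε, inner ℝ (‖v‖⁻¹ • v) e * f v) (𝓝[>] 0)
      (𝓝 (d * volume.real (Metric.closedBall (0 : Euc d) 1) * ∫ u, inner ℝ u e * f u ∂μ)) := by
  have hpos : ∀ᶠ ε : ℝ in 𝓝[>] 0, 0 < ε := self_mem_nhdsWithin
  have h1 := (vol_tendsto hd).mul_const (∫ u, inner ℝ u e * f u ∂μ)
  have hid : Filter.Tendsto (fun ε : ℝ => ε) (𝓝[>] 0) (𝓝 0) :=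
    Filter.tendsto_id.mono_left nhdsWithin_le_nhds
  have h2 : Filter.Tendsto (fun ε : ℝ => ε⁻¹ * volume.real (shell d ε) * (‖e‖ * (C * ε)))
      (𝓝[>] 0) (𝓝 0) := by
    simpa using (vol_tendsto hd).mul ((hid.const_mul (C : ℝ)).const_mul ‖e‖)
  refine h1.congr_dist (squeeze_zero' (Filter.Eventually.of_forall fun _ => dist_nonneg) ?_ h2)
  filter_upwards [hpos] with ε hε
  have hfc := hf.continuous
  have hfin : volume (shell d ε) < ⊤ :=
    (measure_mono Set.sdiff_subset).trans_lt (measure_ball_lt_top (x := (0 : Euc d)) (r := 1 + ε))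
  have hb : ∀ v ∈ shell d ε, ‖inner ℝ (‖v‖⁻¹ • v) e‖ ≤ ‖e‖ := by
    intro v hv
    have : 0 < ‖v‖ := by linarith [(mem_shell.1 hv).2]
    refine (norm_inner_le_norm _ _).trans ?_
    simp [norm_smul, this.ne']
  have hd' : ∀ v ∈ shell d ε, ‖f (‖v‖⁻¹ • v) - f v‖ ≤ C * ε := by
    intro v hv
    obtain ⟨ha, hb⟩ := mem_shell.1 hv
    refine (hf.norm_sub_le _ _).trans ?_
    gcongr
    have : ‖v‖⁻¹ • v - v = (‖v‖⁻¹ - 1) • v := by rw [sub_smul, one_smul]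
    rw [this, norm_smul, Real.norm_eq_abs, abs_of_nonpos
      (by linarith [inv_le_one_of_one_le₀ hb.le]), neg_sub, sub_mul,
      inv_mul_cancel₀ (by linarith)]
    linarith
  have hm1 : AEStronglyMeasurable (fun v : Euc d => inner ℝ (‖v‖⁻¹ • v) e * f (‖v‖⁻¹ • v))
      (volume.restrict (shell d ε)) := by
    apply Measurable.aestronglyMeasurable
    have := hfc.measurable
    fun_prop
  have hm2 : AEStronglyMeasurable (fun v : Euc d => inner ℝ (‖v‖⁻¹ • v) e * f v)
      (volume.restrict (shell d ε)) := by
    apply Measurable.aestronglyMeasurable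
    have := hfc.measurable
    fun_prop
  obtain ⟨K, hK⟩ := (isCompact_closedBall (0 : Euc d) (1 + ε)).exists_bound_of_continuousOn
    hfc.continuousOn
  have hi2 : IntegrableOn (fun v : Euc d => inner ℝ (‖v‖⁻¹ • v) e * f v) (shell d ε) := by
    refine IntegrableOn.of_bound hfin hm2 (‖e‖ * K) ?_
    filter_upwards [ae_restrict_mem (measurableSet_shell d ε)] with v hv
    rw [norm_mul]
    have := hK v (by simpa using (mem_shell.1 hv).1.le)
    gcongr
    exact hb v hv
  have hi1 : IntegrableOn (fun v : Euc d => inner ℝ (‖v‖⁻¹ • v) e * f (‖v‖⁻¹ • v))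
      (shell d ε) := by
    refine IntegrableOn.of_bound hfin hm1 (‖e‖ * K) ?_
    filter_upwards [ae_restrict_mem (measurableSet_shell d ε)] with v hv
    rw [norm_mul]
    have h0 : 0 < ‖v‖ := by linarith [(mem_shell.1 hv).2]
    have := hK (‖v‖⁻¹ • v) (by simp [norm_smul, h0.ne', hε.le])
    gcongr
    exact hb v hv
  rw [mul_assoc, ← shell_integral hd hε μ hμ hμinv (fun u => inner ℝ u e * f u) (by fun_prop),
    Real.dist_eq, ← mul_sub, ← integral_sub hi1 hi2, abs_mul, abs_of_pos (inv_pos.2 hε), mul_assoc]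
  gcongr
  rw [mul_comm, ← Real.norm_eq_abs]
  refine norm_setIntegral_le_of_norm_le_const hfin fun v hv => ?_
  rw [← mul_sub, norm_mul]
  gcongr
  · exact hb v hv
  · exact hd' v hv

lemma euc_ball_div {d : ℕ} (hd : 1 ≤ d) (e : Euc d) {C : NNReal}
    (f : Euc d → ℝ) (hf : LipschitzWith C f)
    (μ : Measure (Euc d)) [IsProbabilityMeasure μ] (hμ : ∀ᵐ v ∂μ, ‖v‖ = 1)
    (hμinv : ∀ R : Euc d ≃ₗᵢ[ℝ] Euc d, μ.map (⇑R) = μ) :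
    ∫ v in Metric.closedBall 0 1, lineDeriv ℝ f v e =
      d * volume.real (Metric.closedBall (0 : Euc d) 1) * ∫ u, inner ℝ u e * f u ∂μ := by
  refine tendsto_nhds_unique (lhs_tendsto e f hf)
    ((rhs_tendsto hd e f hf μ hμ hμinv).congr' ?_)
  filter_upwards [self_mem_nhdsWithin] with ε hε
  exact (cut_parts hd hε e f hf).symm

/-- **The two-point sphere estimator is an unbiased gradient estimator of the
ball-smoothed function (Lemma 3(c)).**  Let `ℓ : ℝ^d → ℝ` be Lipschitz (w.r.t. the
Euclidean norm), `δ > 0`, and `ℓ̆ x = ⨍_{B} ℓ(x + δ v) dv` the average over the closed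
Euclidean unit ball.  Let `μ` be the uniform (rotation-invariant) probability measure on
the Euclidean unit sphere, viewed as a measure on `ℝ^d`.  Then `ℓ̆` is differentiable
and its gradient at every `x` equals
`(d/δ) ∫ ℓ(x + δ u) u dμ(u) = ∫ (d/(2δ)) (ℓ(x + δ u) - ℓ(x - δ u)) u dμ(u)`. -/
theorem smoothed_function_gradient
    (d : ℕ) (hd : 1 ≤ d)
    (ℓ : Euc d → ℝ) (G : ℝ) (hG : 0 ≤ G)
    (hlip : ∀ a b : Euc d, |ℓ a - ℓ b| ≤ G * ‖a - b‖)
    (δ : ℝ) (hδ : 0 < δ)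
    (ℓs : Euc d → ℝ)
    (hℓs : ∀ x, ℓs x = ⨍ v in Metric.closedBall (0 : Euc d) 1, ℓ (x + δ • v) ∂volume)
    -- μ is the uniform probability measure on the Euclidean unit sphere:
    -- a rotation-invariant probability measure concentrated on the sphere
    (μ : Measure (Euc d)) (hμprob : IsProbabilityMeasure μ)
    (hμsphere : μ {v : Euc d | ‖v‖ = 1}ᶜ = 0)
    (hμinv : ∀ R : Euc d ≃ₗᵢ[ℝ] Euc d, μ.map (⇑R) = μ) :
    ∀ x : Euc d,
      HasGradientAt ℓs (((d : ℝ) / δ) • ∫ u, ℓ (x + δ • u) • u ∂μ) x ∧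
      ((d : ℝ) / δ) • (∫ u, ℓ (x + δ • u) • u ∂μ) =
        ∫ u, ((d : ℝ) / (2 * δ) * (ℓ (x + δ • u) - ℓ (x - δ • u))) • u ∂μ := by
  have hμ : ∀ᵐ v ∂μ, ‖v‖ = 1 := by
    rw [ae_iff]; exact hμsphere
  have hL : LipschitzWith G.toNNReal ℓ := by
    apply LipschitzWith.of_dist_le_mul
    intro a b
    rw [Real.dist_eq, dist_eq_norm]
    rw [Real.coe_toNNReal _ hG]
    exact hlip a b
  have hc := hL.continuous
  intro x
  obtain ⟨K, hK⟩ := (isCompact_closedBall x δ).exists_bound_of_continuousOn hc.continuousOn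
  have hint : ∀ s : ℝ, |s| = δ → Integrable (fun u => ℓ (x + s • u) • u) μ := by
    intro s hs
    refine Integrable.of_bound (C := K) (Continuous.aestronglyMeasurable (by fun_prop)) ?_
    filter_upwards [hμ] with u hu
    rw [norm_smul, hu, mul_one]
    exact hK _ (by simp [norm_smul, hu, hs])
  have hi1 := hint δ (abs_of_pos hδ)
  have hi2 : Integrable (fun u => ℓ (x - δ • u) • u) μ := by
    simpa [← sub_eq_add_neg] using hint (-δ) (by simp [abs_of_pos hδ])
  refine ⟨?_, ?_⟩
  · rw [hasGradientAt_iff_hasFDerivAt]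
    set B := Metric.closedBall (0 : Euc d) 1 with hB
    have : IsFiniteMeasure (volume.restrict B) :=
      ⟨by simpa using measure_closedBall_lt_top⟩
    let f : Euc d → ℝ := fun v => ℓ (x + δ • v)
    have hf : LipschitzWith (G.toNNReal * δ.toNNReal) f := by
      apply LipschitzWith.of_dist_le_mul
      intro a b
      rw [Real.dist_eq, dist_eq_norm]
      refine (hlip _ _).trans (le_of_eq ?_)
      rw [add_sub_add_left_eq_sub, ← smul_sub, norm_smul, Real.norm_of_nonneg hδ.le]
      rw [NNReal.coe_mul, Real.coe_toNNReal _ hG, Real.coe_toNNReal _ hδ.le, mul_assoc]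
    have hdf : ∀ᵐ v ∂(volume : Measure (Euc d)), DifferentiableAt ℝ ℓ (x + δ • v) := by
      filter_upwards [hf.ae_differentiableAt] with v hv
      have h1 : ℓ = f ∘ (fun w => δ⁻¹ • (w - x)) := by
        ext w; simp [f, smul_smul, hδ.ne']
      rw [h1]
      apply DifferentiableAt.comp
      · simpa [smul_smul, hδ.ne'] using hv
      · fun_prop
    have hbd : ∀ s : Euc d, IntegrableOn (fun v => ℓ (s + δ • v)) B := fun s =>
      (Continuous.continuousOn (by fun_prop)).integrableOn_compact (isCompact_closedBall _ _)
    obtain ⟨hI, hD⟩ := hasFDerivAt_integral_of_dominated_loc_of_lip (𝕜 := ℝ)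
      (μ := volume.restrict B) (F := fun s v => ℓ (s + δ • v))
      (F' := fun v => fderiv ℝ ℓ (x + δ • v)) (x₀ := x) (s := Set.univ) (bound := fun _ => G)
      Filter.univ_mem
      (Filter.Eventually.of_forall fun s => (hbd s).aestronglyMeasurable) (hbd x)
      (((measurable_fderiv ℝ ℓ).comp (by fun_prop)).aestronglyMeasurable)
      (Filter.Eventually.of_forall fun v => by
        apply LipschitzOnWith.of_dist_le_mul
        intro a _ b _
        simp only [Real.coe_nnabs, abs_of_nonneg hG]
        rw [Real.dist_eq, dist_eq_norm]
        simpa using hlip (a + δ • v) (b + δ • v))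
      (integrable_const _)
      (by
        filter_upwards [ae_restrict_of_ae hdf] with v hv
        have h2 := hv.hasFDerivAt
        exact (hasFDerivAt_comp_add_right (δ • v)).2 h2)
    have hV := volB_pos d
    have hs : ℓs = fun s => (volume.real B)⁻¹ * ∫ v in B, ℓ (s + δ • v) := by
      ext s
      rw [hℓs, setAverage_eq, smul_eq_mul]
    rw [hs]
    have hD2 := hD.const_mul (volume.real B)⁻¹
    refine hD2.congr_fderiv (ContinuousLinearMap.ext fun e => Eq.symm ?_)
    have hdiv := euc_ball_div hd e f hf μ hμ hμinv
    have hld : ∫ v in B, lineDeriv ℝ f v e = δ * ∫ v in B, fderiv ℝ ℓ (x + δ • v) e := by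
      rw [← integral_const_mul]
      apply integral_congr_ae
      filter_upwards [ae_restrict_of_ae hdf] with v hv
      have h3 : HasFDerivAt f ((fderiv ℝ ℓ (x + δ • v)).comp
          (δ • ContinuousLinearMap.id ℝ (Euc d))) v :=
        hv.hasFDerivAt.comp v (((hasFDerivAt_id v).const_smul δ).const_add x)
      rw [(h3.hasLineDerivAt e).lineDeriv]
      simp
    rw [hld] at hdiv
    have hin : inner ℝ (∫ u, ℓ (x + δ • u) • u ∂μ) e = ∫ u, inner ℝ u e * f u ∂μ := by
      rw [real_inner_comm, ← integral_inner hi1]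
      congr 1
      ext u
      rw [inner_smul_right, real_inner_comm, mul_comm]
    simp only [InnerProductSpace.toDual_apply_apply, _root_.smul_apply,
      ContinuousLinearMap.integral_apply hI, inner_smul_left, smul_eq_mul, hin]
    simp only [conj_trivial]
    rw [← hB] at hV hdiv
    field_simp
    linarith
  · have hneg : ∫ u, ℓ (x - δ • u) • u ∂μ = - ∫ u, ℓ (x + δ • u) • u ∂μ := by
      conv_lhs => rw [← hμinv (LinearIsometryEquiv.neg ℝ)]
      rw [integral_map (LinearIsometryEquiv.continuous _).aemeasurable
        (Continuous.aestronglyMeasurable (by fun_prop))]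
      simp [integral_neg]
    have : ∀ u : Euc d, ((d : ℝ) / (2 * δ) * (ℓ (x + δ • u) - ℓ (x - δ • u))) • u =
        ((d : ℝ) / (2 * δ)) • (ℓ (x + δ • u) • u - ℓ (x - δ • u) • u) := by
      intro u; rw [← sub_smul, smul_smul]
    simp_rw [this]
    rw [integral_smul, integral_sub hi1 hi2, hneg, sub_neg_eq_add, ← two_smul ℝ, smul_smul]
    congr 1
    field_simp
end

section
/- Dual-norm bound for the two-point bandit gradient estimator (Lemma 4): Let N be a norm on ℝ^d with dual norm N_*(g) = sup{⟪g,x⟫ : N(x) ≤ 1}, and suppose there are constants p̄, p̄_* > 0 with N(x) ≤ p̄ ‖x‖₂ and N_*(x) ≤ p̄_* ‖x‖₂ for all x ∈ ℝ^d. Let K ⊆ ℝ^d, let ℓ : ℝ^d → ℝ satisfy |ℓ(a) − ℓ(b)| ≤ G N(a − b) for all a, b ∈ K, let δ > 0, let u ∈ ℝ^d with ‖u‖₂ = 1, and let x ∈ ℝ^d be such that x + δu ∈ K and x − δu ∈ K. Then N_*( (d/(2δ)) ( ℓ(x + δu) − ℓ(x − δu) ) u ) ≤ p̄ p̄_* d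 G. -/
open scoped RealInnerProductSpace

/-- **Dual-norm bound for the two-point bandit gradient estimator (Lemma 4).**
Suppose `N ≤ p̄ ‖·‖₂` and `N_* ≤ p̄_* ‖·‖₂`, `ℓ` is `G`-Lipschitz w.r.t. `N` on `K`,
`δ > 0`, `‖u‖₂ = 1`, and `x ± δu ∈ K`.  Then
`N_*((d/(2δ)) (ℓ(x + δu) - ℓ(x - δu)) u) ≤ p̄ p̄_* d G`. -/
theorem bandit_gradient_estimator_bound
    (d : ℕ) (hd : 1 ≤ d)
    -- N is a norm on ℝ^d
    (N : Euc d → ℝ)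
    (hN_add : ∀ x y, N (x + y) ≤ N x + N y)
    (hN_smul : ∀ (c : ℝ) (x : Euc d), N (c • x) = |c| * N x)
    (hN_pos : ∀ x : Euc d, x ≠ 0 → 0 < N x)
    -- comparison with the Euclidean norm
    (pb pbs : ℝ) (hpb : 0 < pb) (hpbs : 0 < pbs)
    (hNle : ∀ x : Euc d, N x ≤ pb * ‖x‖)
    (hNsle : ∀ x : Euc d, dualNorm d N x ≤ pbs * ‖x‖)
    -- ℓ is G-Lipschitz w.r.t. N on K
    (K : Set (Euc d))
    (ℓ : Euc d → ℝ) (G : ℝ)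
    (hlip : ∀ a ∈ K, ∀ b ∈ K, |ℓ a - ℓ b| ≤ G * N (a - b))
    (δ : ℝ) (hδ : 0 < δ)
    (u : Euc d) (hu : ‖u‖ = 1)
    (x : Euc d) (hxp : x + δ • u ∈ K) (hxm : x - δ • u ∈ K) :
    dualNorm d N (((d : ℝ) / (2 * δ) * (ℓ (x + δ • u) - ℓ (x - δ • u))) • u) ≤
      pb * pbs * d * G := by
  refine (hNsle _).trans ?_
  have hu0 : u ≠ 0 := by
    intro h
    simp [h] at hu
  have hNu := hN_pos u hu0
  have hNu' : N u ≤ pb := by simpa [hu] using hNle u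
  have h := hlip _ hxp _ hxm
  have e : (x + δ • u) - (x - δ • u) = (2 * δ) • u := by module
  have h2 : (0 : ℝ) < 2 * δ := by positivity
  rw [e, hN_smul, abs_of_pos h2] at h
  have hG : 0 ≤ G := by
    have h0 := (abs_nonneg _).trans h
    exact nonneg_of_mul_nonneg_left h0 (by positivity)
  rw [norm_smul, hu, mul_one, Real.norm_eq_abs, abs_mul, abs_of_nonneg (by positivity)]
  calc pbs * ((d : ℝ) / (2 * δ) * |ℓ (x + δ • u) - ℓ (x - δ • u)|)
      ≤ pbs * ((d : ℝ) / (2 * δ) * (G * (2 * δ * N u))) := by gcongr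
    _ = pbs * d * G * N u := by field_simp
    _ ≤ pbs * d * G * pb := by gcongr
    _ = pb * pbs * d * G := by ring
end
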